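/- Let n ≥ 3, k an integer with 1 < k < n/2, and p > nk/(n-2k). Let u be a regular solution of the initial value problem -(1/k)·C(n-1,k-1)·(r^{n-k}|u'|^{k-1}u')' = r^{n-1}u^p, u > 0, u'(0) = 0, u(0) = ρ > 0. If the limit B := lim_{r→∞} u(r)·r^{2k/(p-k)} exists and is positive, then B = A, where A = ((1/k)·C(n-1,k-1))^{1/(p-k)}·(2k/(p-k))^{k/(p-k)}·(n − 2pk/(p-k))^{1/(p-k)}. -/

import Mathlib

open MeasureTheory Real Set Filter Asymptotics

noncomputable section

namespace KHessianPaper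

/-- The binomial coefficient `C(n-1, k-1)` as a real number. -/
def binomC (n k : ℕ) : ℝ := ((n - 1).choose (k - 1) : ℝ)

/-- The flux `w(r) = r^{n-k} |u'(r)|^{k-1} u'(r)`. -/
def flux (n k : ℕ) (u : ℝ → ℝ) (r : ℝ) : ℝ :=
  r ^ (n - k) * |deriv u r| ^ (k - 1) * deriv u r

/-- `u` is a regular solution of the radial `k`-Hessian initial value problem
`-(1/k) C(n-1,k-1) (r^{n-k} |u'|^{k-1} u')' = r^{n-1} u^p`, `u > 0`, `u'(0) = 0`, `u(0) = ρ`. -/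
structure IsRegularSolution (n k : ℕ) (p ρ : ℝ) (u : ℝ → ℝ) : Prop where
  contDiffOn : ContDiffOn ℝ 1 u (Ici 0)
  deriv_zero : derivWithin u (Ici 0) 0 = 0
  init : u 0 = ρ
  pos : ∀ r : ℝ, 0 ≤ r → 0 < u r
  eqn : ∀ r : ℝ, 0 < r →
    HasDerivAt (flux n k u) (-((k : ℝ) / binomC n k) * r ^ (n - 1) * u r ^ p) r
  radial_smooth : ContDiff ℝ 2 (fun x : EuclideanSpace ℝ (Fin n) => -u ‖x‖)

/-- `φ : [0,∞) → ℝ` is the radial profile of a smooth compactly supported function on `ℝⁿ`. -/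
def MemWStar (n : ℕ) (φ : ℝ → ℝ) : Prop :=
  ∃ Φ : EuclideanSpace ℝ (Fin n) → ℝ,
    ContDiff ℝ (⊤ : ℕ∞) Φ ∧ HasCompactSupport Φ ∧ ∀ x, Φ x = φ ‖x‖

/-- The weak form of the equation tested against `φ`. -/
def WeakEqn (n k : ℕ) (p : ℝ) (u φ : ℝ → ℝ) : Prop :=
  ∫ r in Ioi (0 : ℝ),
      ((1 / (k : ℝ)) * binomC n k * r ^ (n - k) * |deriv u r| ^ (k - 1) * deriv u r
          * deriv φ r
        - r ^ (n - 1) * u r ^ p * φ r) = 0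

/-- The second-variation quadratic form `Q_u(φ)`. -/
def Qform (n k : ℕ) (p : ℝ) (u φ : ℝ → ℝ) : ℝ :=
  binomC n k * ∫ r in Ioi (0 : ℝ), r ^ (n - k) * |deriv u r| ^ (k - 1) * (deriv φ r) ^ 2
    - p * ∫ r in Ioi (0 : ℝ), r ^ (n - 1) * u r ^ (p - 1) * (φ r) ^ 2

/-- `u` is a positive stable solution of the radial `k`-Hessian equation. -/
def IsStableSolution (n k : ℕ) (p : ℝ) (u : ℝ → ℝ) : Prop :=
  (∀ r : ℝ, 0 < r → 0 < u r) ∧ ContDiffOn ℝ 1 u (Ioi 0) ∧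
  (∀ φ, MemWStar n φ → WeakEqn n k p u φ) ∧
  (∀ φ, MemWStar n φ → 0 ≤ Qform n k p u φ)

/-- `u` is a positive stable solution on `(R,∞)` of the radial `k`-Hessian equation. -/
def IsStableSolutionOn (n k : ℕ) (p : ℝ) (R : ℝ) (u : ℝ → ℝ) : Prop :=
  (∀ r : ℝ, 0 < r → 0 < u r) ∧ ContDiffOn ℝ 1 u (Ioi 0) ∧
  (∀ φ, MemWStar n φ → WeakEqn n k p u φ) ∧
  (∀ φ : ℝ → ℝ, ContDiff ℝ (⊤ : ℕ∞) φ → HasCompactSupport φ → tsupport φ ⊆ Ioi R →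
    0 ≤ Qform n k p u φ)

/-- The constant `A` in the singular solution `u_s(r) = A r^{-2k/(p-k)}`. -/
def Aconst (n k : ℕ) (p : ℝ) : ℝ :=
  ((1 / (k : ℝ)) * binomC n k) ^ (1 / (p - k))
    * (2 * (k : ℝ) / (p - (k : ℝ))) ^ ((k : ℝ) / (p - k))
    * ((n : ℝ) - 2 * p * k / (p - k)) ^ (1 / (p - k))

/-- The singular solution `u_s(r) = A r^{-2k/(p-k)}`. -/
def uSing (n k : ℕ) (p : ℝ) (r : ℝ) : ℝ := Aconst n k p * r ^ (-(2 * (k : ℝ) / (p - k)))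

/-- The Joseph–Lundgren exponent (finite form, relevant when `n > 2k+8`). -/
def pJL (n k : ℕ) : ℝ :=
  ((k : ℝ) * ((n : ℝ) ^ 2 - 2 * ((k : ℝ) + 3) * (n : ℝ) + 4 * (k : ℝ))
      + 4 * (k : ℝ) * Real.sqrt (2 * ((k : ℝ) + 1) * (n : ℝ) - 4 * (k : ℝ)))
    / (((n : ℝ) - 2 * (k : ℝ)) * ((n : ℝ) - 2 * (k : ℝ) - 8))

/-- The exponent `p* = k(n+2k)/(n-2k)`. -/
def pStar (n k : ℕ) : ℝ := (k : ℝ) * ((n : ℝ) + 2 * (k : ℝ)) / ((n : ℝ) - 2 * (k : ℝ))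

/-!
Write `α = 2k/(p-k)` and `m = n - αp > 0`. Since `u ~ B r^{-α}`, the equation makes the derivative
of the flux asymptotic to a multiple of `r^{m-1}`, so l'Hôpital's rule in the form `∞/∞` gives the
limit of `flux / r^m`. Taking `k`-th roots yields `-u' ~ V r^{-α-1}`, and l'Hôpital's rule in the
form `0/0` forces `V = αB`. Comparing the two expressions of `V` leaves the algebraic equation
`(αB)^k m = k / C(n-1,k-1) B^p`, whose only positive root is `A`.
-/

theorem isLittleO_atTop_of_deriv {E : Type*} [NormedAddCommGroup E] [NormedSpace ℝ E]
    {f f' : ℝ → E} {g g' : ℝ → ℝ}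
    (hf : ∀ᶠ x in atTop, HasDerivAt f (f' x) x) (hg : ∀ᶠ x in atTop, HasDerivAt g (g' x) x)
    (hg' : ∀ᶠ x in atTop, 0 ≤ g' x) (hgtop : Tendsto g atTop atTop) (h : f' =o[atTop] g') :
    f =o[atTop] g := by
  refine isLittleO_iff.2 fun c hc ↦ ?_
  have hbound : ∀ᶠ x in atTop, ‖f' x‖ ≤ c / 2 * g' x := by
    filter_upwards [isLittleO_iff.1 h (half_pos hc), hg'] with x hx hx'
    rwa [norm_of_nonneg hx'] at hx
  obtain ⟨R, hR⟩ := eventually_atTop.1 (hf.and (hg.and hbound))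
  have hderiv (x : ℝ) (hx : R ≤ x) :
      HasDerivAt (fun y ↦ ‖f R‖ + c / 2 * (g y - g R)) (c / 2 * g' x) x :=
    (((hR x hx).2.1.sub_const _).const_mul _).const_add _
  have hf_le (x : ℝ) (hx : R ≤ x) : ‖f x‖ ≤ ‖f R‖ + c / 2 * (g x - g R) :=
    image_norm_le_of_norm_deriv_right_le_deriv_boundary'
      (fun y hy ↦ (hR y hy.1).1.continuousAt.continuousWithinAt)
      (fun y hy ↦ (hR y hy.1).1.hasDerivWithinAt) (by simp)
      (fun y hy ↦ (hderiv y hy.1).continuousAt.continuousWithinAt)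
      (fun y hy ↦ (hderiv y hy.1).hasDerivWithinAt)
      (fun y hy ↦ (hR y hy.1).2.2) (right_mem_Icc.2 hx)
  filter_upwards [eventually_ge_atTop R,
    (hgtop.const_mul_atTop (half_pos hc)).eventually_ge_atTop (‖f R‖ - c / 2 * g R)] with x hx hgx
  calc ‖f x‖ ≤ ‖f R‖ + c / 2 * (g x - g R) := hf_le x hx
    _ ≤ c * g x := by linarith
    _ ≤ c * ‖g x‖ := by gcongr; exact le_norm_self _

theorem tendsto_div_atTop_of_tendsto_deriv_div {f f' g g' : ℝ → ℝ} {l : ℝ}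
    (hf : ∀ᶠ x in atTop, HasDerivAt f (f' x) x) (hg : ∀ᶠ x in atTop, HasDerivAt g (g' x) x)
    (hg' : ∀ᶠ x in atTop, 0 < g' x) (hgtop : Tendsto g atTop atTop)
    (h : Tendsto (fun x ↦ f' x / g' x) atTop (nhds l)) :
    Tendsto (fun x ↦ f x / g x) atTop (nhds l) := by
  have hderiv : (fun x ↦ f' x - l * g' x) =o[atTop] g' := by
    refine (isLittleO_iff_tendsto' (hg'.mono fun x hx h0 ↦ absurd h0 hx.ne')).2 ?_
    refine (tendsto_sub_nhds_zero_iff.2 h).congr' ?_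
    filter_upwards [hg'] with x hx
    field_simp
  have hsub : (fun x ↦ f x - l * g x) =o[atTop] g :=
    isLittleO_atTop_of_deriv (hf.mp (hg.mono fun x hgx hfx ↦ hfx.sub (hgx.const_mul l))) hg
      (hg'.mono fun _ ↦ le_of_lt) hgtop hderiv
  refine tendsto_sub_nhds_zero_iff.1 (hsub.tendsto_div_nhds_zero.congr' ?_)
  filter_upwards [hgtop.eventually_gt_atTop 0] with x hx
  field_simp

theorem tendsto_rpow_inv_of_tendsto_abs_pow_mul {ι : Type*} {l : Filter ι} {v : ι → ℝ} {k : ℕ}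
    {L : ℝ} (hk : k ≠ 0) (hL : 0 < L)
    (h : Tendsto (fun x ↦ |v x| ^ (k - 1) * v x) l (nhds L)) :
    Tendsto v l (nhds (L ^ (k : ℝ)⁻¹)) := by
  refine (h.rpow_const (Or.inl hL.ne')).congr' ?_
  filter_upwards [h.eventually_const_lt hL] with x hx
  have hv : 0 < v x := pos_of_mul_pos_right hx (by positivity)
  rw [abs_of_pos hv, pow_sub_one_mul hk, pow_rpow_inv_natCast hv.le hk]

theorem tendsto_zero_of_tendsto_mul_rpow {u : ℝ → ℝ} {α B : ℝ} (hα : 0 < α)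
    (h : Tendsto (fun r ↦ u r * r ^ α) atTop (nhds B)) : Tendsto u atTop (nhds 0) := by
  have hprod := h.mul (tendsto_rpow_neg_atTop hα)
  rw [mul_zero] at hprod
  refine hprod.congr' ?_
  filter_upwards [eventually_gt_atTop 0] with r hr
  rw [mul_assoc, ← rpow_add hr, add_neg_cancel, rpow_zero, mul_one]

theorem eq_mul_of_tendsto_mul_rpow_of_tendsto_neg_deriv_mul_rpow {u : ℝ → ℝ} {α B V : ℝ}
    (hα : 0 < α) (hdiff : ∀ᶠ r in atTop, DifferentiableAt ℝ u r)
    (hB : Tendsto (fun r ↦ u r * r ^ α) atTop (nhds B))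
    (hV : Tendsto (fun r ↦ -deriv u r * r ^ (α + 1)) atTop (nhds V)) :
    V = α * B := by
  have hlim : Tendsto (fun r ↦ u r / r ^ (-α)) atTop (nhds (V / α)) := by
    refine HasDerivAt.lhopital_zero_atTop (hdiff.mono fun r ↦ DifferentiableAt.hasDerivAt)
      (g' := fun r ↦ -α * r ^ (-α - 1)) ?_ ?_ (tendsto_zero_of_tendsto_mul_rpow hα hB)
      (tendsto_rpow_neg_atTop hα) ((hV.div_const α).congr' ?_)
    all_goals filter_upwards [eventually_gt_atTop 0] with r hr
    · exact hasDerivAt_rpow_const (Or.inl hr.ne')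
    · exact mul_ne_zero (neg_ne_zero.2 hα.ne') (rpow_pos_of_pos hr _).ne'
    · rw [← neg_add', rpow_neg hr.le]
      field_simp
  have hBV : B = V / α := by
    refine tendsto_nhds_unique hB (hlim.congr' ?_)
    filter_upwards [eventually_gt_atTop 0] with r hr
    rw [rpow_neg hr.le, div_inv_eq_mul]
  rw [hBV, mul_div_cancel₀ _ hα.ne']

section Flux

variable {n k : ℕ} {p α B : ℝ} {u : ℝ → ℝ}

theorem IsRegularSolution.differentiableAt {ρ r : ℝ} (hu : IsRegularSolution n k p ρ u)
    (hr : 0 < r) : DifferentiableAt ℝ u r :=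
  (hu.contDiffOn.differentiableOn one_ne_zero).differentiableAt (Ici_mem_nhds hr)

theorem binomC_pos (hkn : k ≤ n) : 0 < binomC n k :=
  Nat.cast_pos.2 (Nat.choose_pos (Nat.sub_le_sub_right hkn 1))

theorem tendsto_flux_div_rpow (hn : 1 ≤ n) (hαp : α * p < n) (hBpos : 0 < B)
    (heqn : ∀ᶠ r in atTop,
      HasDerivAt (flux n k u) (-((k : ℝ) / binomC n k) * r ^ (n - 1) * u r ^ p) r)
    (hB : Tendsto (fun r ↦ u r * r ^ α) atTop (nhds B)) :
    Tendsto (fun r ↦ flux n k u r / r ^ (n - α * p)) atTop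
      (nhds (-((k : ℝ) / binomC n k) * B ^ p / (n - α * p))) := by
  have hm : 0 < n - α * p := sub_pos.2 hαp
  refine tendsto_div_atTop_of_tendsto_deriv_div heqn
    (g' := fun r ↦ (n - α * p) * r ^ (n - α * p - 1)) ?_ ?_ (tendsto_rpow_atTop hm) ?_
  · filter_upwards [eventually_gt_atTop 0] with r hr
    exact hasDerivAt_rpow_const (Or.inl hr.ne')
  · filter_upwards [eventually_gt_atTop 0] with r hr
    exact mul_pos hm (rpow_pos_of_pos hr _)
  refine (((hB.rpow_const (Or.inl hBpos.ne')).const_mul _).div_const _).congr' ?_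
  filter_upwards [eventually_gt_atTop 0, hB.eventually_const_lt hBpos] with r hr hur
  have hrα : 0 < r ^ α := rpow_pos_of_pos hr _
  have hu : 0 < u r := pos_of_mul_pos_left hur hrα.le
  have hpow : r ^ (n - 1) = r ^ (α * p) * r ^ (n - α * p - 1) := by
    rw [← rpow_add hr, ← rpow_natCast, Nat.cast_pred hn]
    ring_nf
  rw [mul_rpow hu.le hrα.le, ← rpow_mul hr.le, hpow]
  field_simp

theorem flux_eq_neg_abs_pow_mul_mul_rpow {β r : ℝ} (hk : k ≠ 0) (hkn : k ≤ n) (hr : 0 < r) :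
    flux n k u r = -(|-deriv u r * r ^ β| ^ (k - 1) * (-deriv u r * r ^ β)) *
      r ^ (n - k - k * β) := by
  have hpow : r ^ (n - k) = (r ^ β) ^ (k - 1) * r ^ β * r ^ (n - k - k * β) := by
    rw [pow_sub_one_mul hk, ← rpow_mul_natCast hr.le, ← rpow_add hr, ← rpow_natCast,
      Nat.cast_sub hkn]
    ring_nf
  rw [flux, hpow, abs_mul, abs_neg, abs_of_pos (rpow_pos_of_pos hr β), mul_pow]
  ring

theorem tendsto_neg_deriv_mul_rpow {β L : ℝ} (hk : k ≠ 0) (hkn : k ≤ n) (hL : 0 < L)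
    (h : Tendsto (fun r ↦ flux n k u r / r ^ (n - k - k * β)) atTop (nhds (-L))) :
    Tendsto (fun r ↦ -deriv u r * r ^ β) atTop (nhds (L ^ (k : ℝ)⁻¹)) := by
  refine tendsto_rpow_inv_of_tendsto_abs_pow_mul hk hL ?_
  rw [← neg_neg L]
  refine h.neg.congr' ?_
  filter_upwards [eventually_gt_atTop 0] with r hr
  rw [flux_eq_neg_abs_pow_mul_mul_rpow hk hkn hr,
    mul_div_cancel_right₀ _ (rpow_pos_of_pos hr _).ne', neg_neg]

end Flux

section DecayExponent

/-- The exponent `α = 2k/(p-k)` of the singular solution `A r^{-α}`: the power for which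
`r ↦ λ^α u(λr)` solves the equation whenever `u` does. -/
def decayExponent (k : ℕ) (p : ℝ) : ℝ := 2 * (k : ℝ) / (p - k)

variable {n k : ℕ} {p B : ℝ}

theorem decayExponent_pos (hk : k ≠ 0) (hkp : k < p) : 0 < decayExponent k p :=
  div_pos (by positivity) (sub_pos.2 hkp)

theorem decayExponent_mul_sub (hkp : k < p) : decayExponent k p * (p - k) = 2 * k :=
  div_mul_cancel₀ _ (sub_pos.2 hkp).ne'

theorem lt_of_mul_div_sub_lt (hkn : 2 * k < n)
    (hp : (n : ℝ) * k / ((n : ℝ) - 2 * k) < p) : k < p := by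
  have hd : 0 < (n : ℝ) - 2 * k := sub_pos.2 (by exact_mod_cast hkn)
  refine lt_of_le_of_lt ((le_div_iff₀ hd).2 ?_) hp
  nlinarith [sq_nonneg (k : ℝ)]

theorem decayExponent_mul_lt (hkp : k < p) (hkn : 2 * k < n)
    (hp : (n : ℝ) * k / ((n : ℝ) - 2 * k) < p) : decayExponent k p * p < n := by
  have hd : 0 < (n : ℝ) - 2 * k := sub_pos.2 (by exact_mod_cast hkn)
  rw [div_lt_iff₀ hd] at hp
  rw [decayExponent, div_mul_eq_mul_div, div_lt_iff₀ (sub_pos.2 hkp)]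
  linarith

theorem eq_Aconst_of_mul_eq (hk : k ≠ 0) (hkn : k ≤ n) (hkp : k < p)
    (hαp : decayExponent k p * p < n) (hBpos : 0 < B)
    (h : (decayExponent k p * B) ^ k * (n - decayExponent k p * p) = k / binomC n k * B ^ p) :
    B = Aconst n k p := by
  have hα := decayExponent_pos hk hkp
  have hm : 0 < n - decayExponent k p * p := sub_pos.2 hαp
  have hC := binomC_pos hkn
  have hpow : B ^ (p - k) =
      1 / k * binomC n k * decayExponent k p ^ (k : ℝ) * (n - decayExponent k p * p) := by
    rw [rpow_sub_natCast hBpos.ne', rpow_natCast]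
    field_simp at h ⊢
    linear_combination -h
  have hexp : (n : ℝ) - 2 * p * k / (p - k) = n - decayExponent k p * p := by
    rw [decayExponent]; ring
  calc B = (B ^ (p - k)) ^ (1 / (p - k)) := by
        rw [one_div, rpow_rpow_inv hBpos.le (sub_pos.2 hkp).ne']
    _ = (1 / k * binomC n k) ^ (1 / (p - k)) * decayExponent k p ^ (k / (p - k)) *
          (n - decayExponent k p * p) ^ (1 / (p - k)) := by
        rw [hpow, mul_rpow (by positivity) hm.le, mul_rpow (by positivity) (by positivity),
          ← rpow_mul hα.le, mul_one_div]
    _ = Aconst n k p := by rw [Aconst, hexp, decayExponent]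

end DecayExponent

theorem limit_is_A_general {n k : ℕ} {p B : ℝ} {u : ℝ → ℝ} (hk : k ≠ 0) (hkn : 2 * k < n)
    (hp : (n : ℝ) * k / ((n : ℝ) - 2 * k) < p)
    (hdiff : ∀ᶠ r in atTop, DifferentiableAt ℝ u r)
    (heqn : ∀ᶠ r in atTop,
      HasDerivAt (flux n k u) (-((k : ℝ) / binomC n k) * r ^ (n - 1) * u r ^ p) r)
    (hB : Tendsto (fun r : ℝ ↦ u r * r ^ (2 * (k : ℝ) / (p - k))) atTop (nhds B))
    (hBpos : 0 < B) :
    B = Aconst n k p := by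
  have hkn' : k ≤ n := by omega
  have hkp := lt_of_mul_div_sub_lt hkn hp
  have hαp := decayExponent_mul_lt hkp hkn hp
  have hm : 0 < n - decayExponent k p * p := sub_pos.2 hαp
  have hC := binomC_pos hkn'
  set L := k / binomC n k * B ^ p / (n - decayExponent k p * p) with hL
  have hLpos : 0 < L := by positivity
  have hflux : Tendsto (fun r ↦ flux n k u r / r ^ (n - k - k * (decayExponent k p + 1))) atTop
      (nhds (-L)) := by
    have hexp : n - k - k * (decayExponent k p + 1) = n - decayExponent k p * p := by
      linear_combination decayExponent_mul_sub hkp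
    rw [hexp, hL, ← neg_div, ← neg_mul]
    exact tendsto_flux_div_rpow (by omega) hαp hBpos heqn hB
  have hroot : L ^ (k : ℝ)⁻¹ = decayExponent k p * B :=
    eq_mul_of_tendsto_mul_rpow_of_tendsto_neg_deriv_mul_rpow (decayExponent_pos hk hkp) hdiff hB
      (tendsto_neg_deriv_mul_rpow hk hkn' hLpos hflux)
  refine eq_Aconst_of_mul_eq hk hkn' hkp hαp hBpos ?_
  rw [← hroot, rpow_inv_natCast_pow hLpos.le hk, hL, div_mul_cancel₀ _ hm.ne']

/-- if the limit `B = lim u(r) r^{2k/(p-k)}` exists and is positive,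
it equals the constant `A` of the singular solution. -/
theorem limit_is_A (n k : ℕ) (p ρ B : ℝ) (u : ℝ → ℝ)
    (hn : 3 ≤ n) (hk1 : 1 < k) (hk2 : 2 * k < n) (hρ : 0 < ρ)
    (hp : (n : ℝ) * k / ((n : ℝ) - 2 * k) < p)
    (hu : IsRegularSolution n k p ρ u)
    (hB : Tendsto (fun r : ℝ => u r * r ^ (2 * (k : ℝ) / (p - k))) atTop (nhds B))
    (hBpos : 0 < B) :
    B = Aconst n k p := by
  have hpos := eventually_gt_atTop (0 : ℝ)
  exact limit_is_A_general (by omega) hk2 hp (hpos.mono fun _ ↦ hu.differentiableAt)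
    (hpos.mono hu.eqn) hB hBpos

end KHessianPaper
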